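/- arXiv:2304.04061 — 4 statements merged into one kernel-verified Lean document; each statement's English description precedes it below -/
import Mathlib

section
/- For every integer m ≥ 1, the following equalities of K-submodules of K[F₂] hold: (K·1 ⊕ K[F₂](X₁ − 1)) ∩ I^m = I^m ∩ K[F₂](X₁ − 1) = {v(X₁ − 1) : v ∈ I^{m−1}}, where I⁰ = K[F₂]. -/
noncomputable section

/-- The free group on two generators. -/
abbrev F2 : Type := FreeGroup (Fin 2)

/-- The first generator `X₀` of `F₂`. -/
def X0 : F2 := FreeGroup.of 0

/-- The second generator `X₁` of `F₂`. -/
def X1 : F2 := FreeGroup.of 1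

/-- The unit `e^{2πi/N}` of `ℂ`. -/
def zetaN (N : ℕ) : ℂˣ :=
  Units.mk0 (Complex.exp (2 * Real.pi * Complex.I / N)) (Complex.exp_ne_zero _)

/-- The group `μ_N` of `N`-th roots of unity in `ℂˣ`. -/
def muN (N : ℕ) : Subgroup ℂˣ := rootsOfUnity N ℂ

lemma zetaN_mem (N : ℕ) : zetaN N ∈ muN N := by
  rcases Nat.eq_zero_or_pos N with h | h
  · subst h; simp [muN, mem_rootsOfUnity]
  · rw [muN, mem_rootsOfUnity]
    have hcast : (N : ℂ) ≠ 0 := Nat.cast_ne_zero.mpr h.ne'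
    have : (zetaN N : ℂ) ^ N = 1 := by
      rw [zetaN, Units.val_mk0, ← Complex.exp_nat_mul, mul_div_cancel₀ _ hcast]
      exact Complex.exp_two_pi_mul_I
    exact Units.ext (by simpa using this)

/-- The morphism `π : F₂ → μ_N` determined by `π(X₀) = e^{2πi/N}` and `π(X₁) = 1`. -/
def piN (N : ℕ) : F2 →* (muN N) :=
  FreeGroup.lift (fun i => if i = 0 then ⟨zetaN N, zetaN_mem N⟩ else 1)

/-- The subgroup `H := ker π` of `F₂`. -/
def Hgrp (N : ℕ) : Subgroup F2 := (piN N).ker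

/-- The two-sided ideal `I = ker(K[F₂] → K[μ_N])`, as a `K`-submodule of `K[F₂]`. -/
def Isub (K : Type*) [CommRing K] (N : ℕ) : Submodule K (MonoidAlgebra K F2) :=
  (RingHom.ker (MonoidAlgebra.mapDomainRingHom K (piN N))).restrictScalars K

/-- Powers of the ideal `I`, with the convention `I⁰ = K[F₂]`. -/
def Ipow (K : Type*) [CommRing K] (N : ℕ) : ℕ → Submodule K (MonoidAlgebra K F2)
  | 0 => ⊤
  | (m + 1) => Isub K N * Ipow K N m

/-- The `K`-submodule `K[F₂](g − 1) = {v (g − 1) : v ∈ K[F₂]}` of `K[F₂]`. -/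
def Rsub (K : Type*) [CommRing K] (g : F2) : Submodule K (MonoidAlgebra K F2) :=
  LinearMap.range (LinearMap.mulRight K (MonoidAlgebra.of K F2 g - 1))

/-- The `K`-submodule `W = K·1 ⊕ K[F₂](X₁ − 1)` of `K[F₂]`. -/
def Wsub (K : Type*) [CommRing K] : Submodule K (MonoidAlgebra K F2) :=
  Submodule.span K {1} ⊔ Rsub K X1

/-- Affine action. -/
def foxAct (K : Type*) [CommRing K] : F2 →* Equiv.Perm (MonoidAlgebra K F2) :=
  FreeGroup.lift (fun i =>
    { toFun := fun x => MonoidAlgebra.of K F2 (FreeGroup.of i) * x + (if i = 0 then 0 else 1)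
      invFun := fun x => MonoidAlgebra.of K F2 (FreeGroup.of i)⁻¹ * (x - (if i = 0 then 0 else 1))
      left_inv := fun x => by
        simp only [add_sub_cancel_right]
        rw [← mul_assoc, ← map_mul, inv_mul_cancel, map_one, one_mul]
      right_inv := fun x => by
        simp only
        rw [← mul_assoc, ← map_mul, mul_inv_cancel, map_one, one_mul, sub_add_cancel] })

lemma foxAct_of (K : Type*) [CommRing K] (i : Fin 2) (x : MonoidAlgebra K F2) :
    foxAct K (FreeGroup.of i) x
      = MonoidAlgebra.of K F2 (FreeGroup.of i) * x + (if i = 0 then 0 else 1) := by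
  rw [foxAct, FreeGroup.lift_apply_of]; rfl

lemma foxAct_sub (K : Type*) [CommRing K] (g : F2) : ∀ (x y : MonoidAlgebra K F2),
    foxAct K g x - foxAct K g y = MonoidAlgebra.of K F2 g * (x - y) := by
  induction g using FreeGroup.induction_on with
  | C1 => intro x y; rw [map_one, map_one, one_mul]; rfl
  | of i => intro x y; rw [foxAct_of, foxAct_of, mul_sub]; abel
  | inv_of i h =>
    intro x y
    have := h (foxAct K (FreeGroup.of i)⁻¹ x) (foxAct K (FreeGroup.of i)⁻¹ y)
    rw [← Equiv.Perm.mul_apply, ← Equiv.Perm.mul_apply, ← map_mul, mul_inv_cancel, map_one] at this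
    simp only [Equiv.Perm.coe_one, id] at this
    rw [this, ← mul_assoc, ← map_mul, inv_mul_cancel, map_one, one_mul]
  | mul a b ha hb =>
    intro x y
    rw [map_mul, Equiv.Perm.mul_apply, Equiv.Perm.mul_apply, ha, hb, map_mul, mul_assoc]

/-- Augmentation. -/
def aug (K : Type*) [CommRing K] : MonoidAlgebra K F2 →ₐ[K] K :=
  MonoidAlgebra.lift K K F2 1

/-- Fox derivative with respect to `X₁`. -/
def foxD (K : Type*) [CommRing K] : MonoidAlgebra K F2 →ₗ[K] MonoidAlgebra K F2 :=
  (Finsupp.linearCombination K (fun g : F2 => foxAct K g 0)) ∘ₗ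
    (MonoidAlgebra.coeffLinearEquiv K).toLinearMap

lemma foxD_of (K : Type*) [CommRing K] (g : F2) :
    foxD K (MonoidAlgebra.of K F2 g) = foxAct K g 0 := by
  simp [foxD]

lemma aug_of (K : Type*) [CommRing K] (g : F2) :
    aug K (MonoidAlgebra.of K F2 g) = 1 := by
  simp [aug]

lemma foxD_mul (K : Type*) [CommRing K] (a b : MonoidAlgebra K F2) :
    foxD K (a * b) = a * foxD K b + aug K b • foxD K a := by
  induction a using MonoidAlgebra.induction_on with
  | of g =>
    induction b using MonoidAlgebra.induction_on with
    | of h =>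
      rw [← map_mul, foxD_of, foxD_of, foxD_of, aug_of, one_smul, map_mul, Equiv.Perm.mul_apply]
      have := foxAct_sub K g (foxAct K h 0) 0
      rw [sub_zero] at this
      rw [← this]; abel
    | add x y hx hy => rw [mul_add, map_add, hx, hy, map_add, map_add, mul_add, add_smul]; abel
    | smul r x hx =>
      rw [mul_smul_comm, map_smul, hx, map_smul, map_smul, mul_smul_comm, smul_add, smul_assoc]
  | add x y hx hy => rw [add_mul, map_add, hx, hy, map_add, add_mul, smul_add]; abel
  | smul r x hx =>
    rw [smul_mul_assoc, map_smul, hx, map_smul, smul_mul_assoc, smul_add, smul_comm r]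

lemma aug_Isub (K : Type*) [CommRing K] (N : ℕ) (a : MonoidAlgebra K F2) (ha : a ∈ Isub K N) :
    aug K a = 0 := by
  have h : ∀ b : MonoidAlgebra K F2, aug K b = (MonoidAlgebra.lift K K (muN N) 1 :
      MonoidAlgebra K (muN N) →ₐ[K] K) (MonoidAlgebra.mapDomainRingHom K (piN N) b) := by
    intro b
    induction b using MonoidAlgebra.induction_on with
    | of h => rw [aug_of]; simp
    | add x y hx hy => rw [map_add, map_add, map_add, hx, hy]
    | smul r x hx =>
      rw [map_smul, hx, ← map_smul]
      congr 1
      simp [MonoidAlgebra.mapDomain_smul]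
  have ha' : MonoidAlgebra.mapDomainRingHom K (piN N) a = 0 := ha
  rw [h, ha', map_zero]

lemma aug_Ipow (K : Type*) [CommRing K] (N m : ℕ) (a : MonoidAlgebra K F2)
    (ha : a ∈ Ipow K N (m + 1)) : aug K a = 0 := by
  rw [Ipow] at ha
  induction ha using Submodule.mul_induction_on' with
  | mem_mul_mem x hx y hy => rw [map_mul, aug_Isub K N x hx, zero_mul]
  | add x _ y _ hx hy => rw [map_add, hx, hy, add_zero]

lemma foxD_Ipow (K : Type*) [CommRing K] (N m : ℕ) : ∀ (a : MonoidAlgebra K F2),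
    a ∈ Ipow K N (m + 1) → foxD K a ∈ Ipow K N m := by
  induction m with
  | zero => intro a _; exact Submodule.mem_top
  | succ m ih =>
    intro a ha
    rw [Ipow] at ha
    induction ha using Submodule.mul_induction_on' with
    | mem_mul_mem x hx y hy =>
      rw [foxD_mul, aug_Ipow K N m y hy, zero_smul, add_zero]
      exact Submodule.mul_mem_mul hx (ih y hy)
    | add x _ y _ hx hy => rw [map_add]; exact add_mem hx hy

lemma foxD_X1 (K : Type*) [CommRing K] (v : MonoidAlgebra K F2) :
    foxD K (v * (MonoidAlgebra.of K F2 X1 - 1)) = v := by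
  have h1 : foxD K (1 : MonoidAlgebra K F2) = 0 := by
    rw [← map_one (MonoidAlgebra.of K F2), foxD_of, map_one]; rfl
  rw [foxD_mul, map_sub, map_sub, aug_of, map_one (aug K), sub_self, zero_smul, add_zero, foxD_of, h1,
    X1, foxAct_of]
  simp

lemma X1_mem (K : Type*) [CommRing K] (N m : ℕ) : ∀ (v : MonoidAlgebra K F2),
    v ∈ Ipow K N m → v * (MonoidAlgebra.of K F2 X1 - 1) ∈ Ipow K N (m + 1) := by
  induction m with
  | zero =>
    intro v _
    have h : v * (MonoidAlgebra.of K F2 X1 - 1) ∈ Isub K N := by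
      change MonoidAlgebra.mapDomainRingHom K (piN N) (v * (MonoidAlgebra.of K F2 X1 - 1)) = 0
      have : piN N X1 = 1 := by simp [piN, X1]
      rw [map_mul, map_sub, map_one]
      simp [this, MonoidAlgebra.one_def]
    have := Submodule.mul_mem_mul h (Submodule.mem_top : (1 : MonoidAlgebra K F2) ∈ ⊤)
    rwa [mul_one] at this
  | succ m ih =>
    intro v hv
    rw [Ipow] at hv
    induction hv using Submodule.mul_induction_on' with
    | mem_mul_mem x hx y hy =>
      rw [mul_assoc]
      exact Submodule.mul_mem_mul hx (ih y hy)
    | add x _ y _ hx hy => rw [add_mul]; exact add_mem hx hy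

/-- For `m ≥ 1`:
`(K·1 ⊕ K[F₂](X₁ − 1)) ∩ I^m = I^m ∩ K[F₂](X₁ − 1) = {v (X₁ − 1) : v ∈ I^{m−1}}`. -/
theorem statement4 (K : Type*) [CommRing K] [Algebra ℚ K] (N : ℕ) (hN : 0 < N)
    (m : ℕ) (hm : 1 ≤ m) :
    Wsub K ⊓ Ipow K N m = Ipow K N m ⊓ Rsub K X1 ∧
    Ipow K N m ⊓ Rsub K X1 =
      Submodule.map (LinearMap.mulRight K (MonoidAlgebra.of K F2 X1 - 1))
        (Ipow K N (m - 1)) := by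
  obtain ⟨n, rfl⟩ : ∃ n, m = n + 1 := ⟨m - 1, by omega⟩
  rw [Nat.add_sub_cancel]
  refine ⟨?_, ?_⟩
  · ext a
    constructor
    · rintro ⟨hW, hI⟩
      refine ⟨hI, ?_⟩
      obtain ⟨x, hx, y, hy, rfl⟩ := Submodule.mem_sup.mp hW
      obtain ⟨k, rfl⟩ := Submodule.mem_span_singleton.mp hx
      have h0 := aug_Ipow K N n _ hI
      obtain ⟨v, rfl⟩ := hy
      rw [LinearMap.mulRight_apply, map_add, map_mul, map_sub, aug_of, map_one, sub_self,
        mul_zero, add_zero, map_smul, map_one, smul_eq_mul, mul_one] at h0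
      rw [h0, zero_smul, zero_add]
      exact ⟨v, rfl⟩
    · rintro ⟨hI, hR⟩
      exact ⟨Submodule.mem_sup_right hR, hI⟩
  · ext a
    constructor
    · rintro ⟨hI, v, rfl⟩
      refine ⟨v, ?_, rfl⟩
      have := foxD_Ipow K N n _ hI
      rwa [LinearMap.mulRight_apply, foxD_X1] at this
    · rintro ⟨v, hv, rfl⟩
      exact ⟨X1_mem K N n v hv, v, rfl⟩
end
end

section
/- For every integer m ≥ 1, one has the inclusion I^m ⊆ (I^m ∩ K[F₂](X₁ − 1)) + K[F₂](X₀ − 1). Consequently, for every m ≥ 0 the image of I^m under the quotient map K[F₂] → K[F₂]/K[F₂](X₀ − 1) coincides with the image of (K·1 ⊕ K[F₂](X₁ − 1)) ∩ I^m under this quotient map. -/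
noncomputable section

/-- The subgroup of `h` with `h - 1` in a left ideal. -/
def Tgrp (K : Type*) [CommRing K] (J : Ideal (MonoidAlgebra K F2)) : Subgroup F2 where
  carrier := {h | MonoidAlgebra.of K F2 h - 1 ∈ J}
  one_mem' := by simp [MonoidAlgebra.one_def]
  mul_mem' := by
    intro a b ha hb
    have h := J.add_mem (J.mul_mem_left (MonoidAlgebra.of K F2 a) hb) ha
    have e : MonoidAlgebra.of K F2 (a * b) - 1 = MonoidAlgebra.of K F2 a *
      (MonoidAlgebra.of K F2 b - 1) + (MonoidAlgebra.of K F2 a - 1) := by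
      rw [map_mul]; noncomm_ring
    change _ ∈ J
    rw [e]; exact h
  inv_mem' := by
    intro a ha
    have h := J.neg_mem (J.mul_mem_left (MonoidAlgebra.of K F2 a⁻¹) ha)
    have e : MonoidAlgebra.of K F2 a⁻¹ - 1 = -(MonoidAlgebra.of K F2 a⁻¹ *
      (MonoidAlgebra.of K F2 a - 1)) := by
      rw [mul_sub, ← map_mul, inv_mul_cancel, map_one, mul_one, neg_sub]
    change _ ∈ J
    rw [e]; exact h

lemma mem_Tgrp {K : Type*} [CommRing K] {J : Ideal (MonoidAlgebra K F2)} {h : F2} :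
    h ∈ Tgrp K J ↔ MonoidAlgebra.of K F2 h - 1 ∈ J := Iff.rfl

lemma Tgrp_top {K : Type*} [CommRing K] {J : Ideal (MonoidAlgebra K F2)}
    (h0 : X0 ∈ Tgrp K J) (h1 : X1 ∈ Tgrp K J) (g : F2) : g ∈ Tgrp K J := by
  induction g using FreeGroup.induction_on with
  | C1 => exact one_mem _
  | of i => fin_cases i <;> assumption
  | inv_of i ih => exact inv_mem ih
  | mul a b ha hb => exact mul_mem ha hb

/-- `Rsub` as a left ideal. -/
lemma mem_Rsub_iff {K : Type*} [CommRing K] {g : F2} {x : MonoidAlgebra K F2} :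
    x ∈ Rsub K g ↔ x ∈ Ideal.span {MonoidAlgebra.of K F2 g - 1} := by
  rw [Ideal.mem_span_singleton']
  simp [Rsub]

lemma mul_mem_Rsub {K : Type*} [CommRing K] {g : F2} (a : MonoidAlgebra K F2)
    {x : MonoidAlgebra K F2} (hx : x ∈ Rsub K g) : a * x ∈ Rsub K g := by
  rw [mem_Rsub_iff] at *
  exact Ideal.mul_mem_left _ _ hx

lemma zpow_mem_Rsub {K : Type*} [CommRing K] (g : F2) (k : ℤ) :
    MonoidAlgebra.of K F2 (g ^ k) - 1 ∈ Rsub K g := by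
  rw [mem_Rsub_iff, ← mem_Tgrp]
  have h : g ∈ Tgrp K (Ideal.span {MonoidAlgebra.of K F2 g - 1}) :=
    mem_Tgrp.2 (Ideal.subset_span (Set.mem_singleton _))
  exact (Tgrp K _).zpow_mem h k

/-- Generators of `I` as a left ideal. -/
def Jid (K : Type*) [CommRing K] (N : ℕ) : Ideal (MonoidAlgebra K F2) :=
  Ideal.span ({MonoidAlgebra.of K F2 (X0 ^ N) - 1} ∪
    Set.range fun k : ℤ => (MonoidAlgebra.of K F2 X1 - 1) * MonoidAlgebra.of K F2 (X0 ^ k))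

lemma piN_X0 (N : ℕ) : piN N X0 = ⟨zetaN N, zetaN_mem N⟩ := by simp [piN, X0]

lemma piN_X1 (N : ℕ) : piN N X1 = 1 := by simp [piN, X1]

lemma Jid_gen (K : Type*) [CommRing K] (N : ℕ) (k : ℤ) :
    (MonoidAlgebra.of K F2 X1 - 1) * MonoidAlgebra.of K F2 (X0 ^ k) ∈ Jid K N :=
  Ideal.subset_span (Or.inr ⟨k, rfl⟩)

lemma exists_rep (K : Type*) [CommRing K] (N : ℕ) (g : F2) : ∀ k : ℤ, ∃ l : ℤ,
    piN N (g * X0 ^ k) = piN N (X0 ^ l) ∧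
    MonoidAlgebra.of K F2 (g * X0 ^ k) - MonoidAlgebra.of K F2 (X0 ^ l) ∈ Jid K N := by
  induction g using FreeGroup.induction_on with
  | C1 => intro k; exact ⟨k, by simp, by simp⟩
  | of i =>
    intro k
    fin_cases i
    · refine ⟨1 + k, ?_, ?_⟩
      · rw [zpow_add, zpow_one]; rfl
      · rw [zpow_add, zpow_one]; change MonoidAlgebra.of K F2 (X0 * _) - _ ∈ _; simp
    · refine ⟨k, ?_, ?_⟩
      · change piN N (X1 * _) = _
        rw [map_mul, piN_X1, one_mul]
      · change MonoidAlgebra.of K F2 (X1 * _) - _ ∈ _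
        have := Jid_gen K N k
        rwa [sub_mul, one_mul, ← map_mul] at this
  | inv_of i _ =>
    intro k
    fin_cases i
    · refine ⟨-1 + k, ?_, ?_⟩
      · rw [zpow_add, zpow_neg_one]; rfl
      · rw [zpow_add, zpow_neg_one]; change MonoidAlgebra.of K F2 (X0⁻¹ * _) - _ ∈ _; simp
    · refine ⟨k, ?_, ?_⟩
      · change piN N (X1⁻¹ * _) = _
        rw [map_mul, map_inv, piN_X1, inv_one, one_mul]
      · change MonoidAlgebra.of K F2 (X1⁻¹ * _) - _ ∈ _
        have := (Jid K N).neg_mem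
          ((Jid K N).mul_mem_left (MonoidAlgebra.of K F2 X1⁻¹) (Jid_gen K N k))
        rwa [sub_mul, one_mul, mul_sub, ← map_mul, ← map_mul, ← map_mul, inv_mul_cancel_left,
          neg_sub] at this
  | mul a b ha hb =>
    intro k
    obtain ⟨l, h1, h2⟩ := hb k
    obtain ⟨n, h3, h4⟩ := ha l
    refine ⟨n, ?_, ?_⟩
    · rw [← h3, mul_assoc, map_mul, h1, ← map_mul]
    · have := (Jid K N).add_mem
        ((Jid K N).mul_mem_left (MonoidAlgebra.of K F2 a) h2) h4
      rwa [mul_sub, ← map_mul, ← map_mul, sub_add_sub_cancel, ← mul_assoc] at this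

lemma zetaN_prim (N : ℕ) (hN : 0 < N) : IsPrimitiveRoot (zetaN N) N := by
  rw [← IsPrimitiveRoot.coe_units_iff]
  exact Complex.isPrimitiveRoot_exp N hN.ne'

lemma sub_mem_Jid (K : Type*) [CommRing K] (N : ℕ) (hN : 0 < N) (g g' : F2)
    (h : piN N g = piN N g') :
    MonoidAlgebra.of K F2 g - MonoidAlgebra.of K F2 g' ∈ Jid K N := by
  obtain ⟨k, h1, h2⟩ := exists_rep K N g 0
  obtain ⟨l, h3, h4⟩ := exists_rep K N g' 0
  rw [zpow_zero, mul_one] at h1 h2 h3 h4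
  have hkl : piN N (X0 ^ k) = piN N (X0 ^ l) := by rw [← h1, ← h3, h]
  rw [map_zpow, map_zpow, piN_X0] at hkl
  have hz : zetaN N ^ k = zetaN N ^ l := by simpa using congrArg Subtype.val hkl
  have hz' : zetaN N ^ (k - l) = 1 := by rw [zpow_sub, hz, mul_inv_cancel]
  obtain ⟨q, hq⟩ := ((zetaN_prim N hN).zpow_eq_one_iff_dvd _).1 hz'
  have hN' : X0 ^ N ∈ Tgrp K (Jid K N) := Ideal.subset_span (Or.inl rfl)
  have h5 : MonoidAlgebra.of K F2 (X0 ^ (k - l)) - 1 ∈ Jid K N := by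
    rw [← mem_Tgrp, hq, zpow_mul, zpow_natCast]
    exact zpow_mem hN' q
  have h6 := (Jid K N).mul_mem_left (MonoidAlgebra.of K F2 (X0 ^ l)) h5
  rw [mul_sub, mul_one, ← map_mul, ← zpow_add, add_sub_cancel] at h6
  have := (Jid K N).sub_mem ((Jid K N).add_mem h2 h6) h4
  convert this using 1
  abel

lemma Isub_le_Jid (K : Type*) [CommRing K] (N : ℕ) (hN : 0 < N) (x : MonoidAlgebra K F2)
    (hx : x ∈ Isub K N) : x ∈ Jid K N := by
  have hx0 : MonoidAlgebra.mapDomain (piN N) x = 0 := hx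
  let J : Submodule K (MonoidAlgebra K F2) := (Jid K N).restrictScalars K
  have key : ∀ y : MonoidAlgebra K F2,
      y - MonoidAlgebra.mapDomain (Function.invFun (piN N)) (MonoidAlgebra.mapDomain (piN N) y)
        ∈ J := by
    intro y
    induction y using MonoidAlgebra.induction_linear with
    | zero => simp
    | add a b ha hb =>
      rw [MonoidAlgebra.mapDomain_add, MonoidAlgebra.mapDomain_add, add_sub_add_comm]
      exact J.add_mem ha hb
    | single g r =>
      rw [MonoidAlgebra.mapDomain_single, MonoidAlgebra.mapDomain_single]
      have := J.smul_mem r (sub_mem_Jid K N hN g (Function.invFun (piN N) (piN N g))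
        (Function.invFun_eq ⟨g, rfl⟩).symm)
      simpa [smul_sub] using this
  have := key x
  rw [hx0, MonoidAlgebra.mapDomain_zero, sub_zero] at this
  exact this

lemma Isub_mul_left {K : Type*} [CommRing K] {N : ℕ} (a : MonoidAlgebra K F2)
    {x : MonoidAlgebra K F2} (hx : x ∈ Isub K N) : a * x ∈ Isub K N :=
  Ideal.mul_mem_left (RingHom.ker (MonoidAlgebra.mapDomainRingHom K (piN N))) a hx

lemma Isub_mul_right {K : Type*} [CommRing K] {N : ℕ} (a : MonoidAlgebra K F2)
    {x : MonoidAlgebra K F2} (hx : x ∈ Isub K N) : x * a ∈ Isub K N :=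
  Ideal.mul_mem_right a (RingHom.ker (MonoidAlgebra.mapDomainRingHom K (piN N))) hx

lemma Ipow_succ' (K : Type*) [CommRing K] (N m : ℕ) :
    Ipow K N (m + 1) = Ipow K N m * Isub K N := by
  induction m with
  | zero =>
    change Isub K N * ⊤ = ⊤ * Isub K N
    apply le_antisymm
    · rw [Submodule.mul_le]
      intro a ha b _
      have := Submodule.mul_mem_mul (Submodule.mem_top (x := (1 : MonoidAlgebra K F2)))
        (Isub_mul_right b ha)
      rwa [one_mul] at this
    · rw [Submodule.mul_le]
      intro a _ b hb
      have := Submodule.mul_mem_mul (Isub_mul_left a hb)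
        (Submodule.mem_top (x := (1 : MonoidAlgebra K F2)))
      rwa [mul_one] at this
  | succ m ih =>
    change Isub K N * Ipow K N (m + 1) = (Isub K N * Ipow K N m) * Isub K N
    rw [ih, mul_assoc]

lemma Ipow_mul_right {K : Type*} [CommRing K] {N m : ℕ} (a : MonoidAlgebra K F2)
    {u : MonoidAlgebra K F2} (hu : u ∈ Ipow K N m) : u * a ∈ Ipow K N m := by
  cases m with
  | zero => trivial
  | succ m =>
    rw [Ipow_succ'] at *
    induction hu using Submodule.mul_induction_on' with
    | mem_mul_mem p hp q hq =>
      rw [mul_assoc]; exact Submodule.mul_mem_mul hp (Isub_mul_right a hq)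
    | add p _ q _ h1 h2 => rw [add_mul]; exact add_mem h1 h2

lemma X1_mem_Isub (K : Type*) [CommRing K] (N : ℕ) :
    MonoidAlgebra.of K F2 X1 - 1 ∈ Isub K N := by
  change MonoidAlgebra.mapDomainRingHom K (piN N) _ = 0
  rw [map_sub, map_one, sub_eq_zero]
  simp [piN_X1, MonoidAlgebra.one_def]

lemma part_one (K : Type*) [CommRing K] (N : ℕ) (hN : 0 < N) (m : ℕ) :
    Ipow K N (m + 1) ≤ (Ipow K N (m + 1) ⊓ Rsub K X1) ⊔ Rsub K X0 := by
  conv_lhs => rw [Ipow_succ']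
  rw [Submodule.mul_le]
  intro u hu x hx
  replace hx := Isub_le_Jid K N hN x hx
  unfold Jid Ideal.span at hx
  induction hx using Submodule.span_induction generalizing u with
  | mem x hx =>
    rcases hx with hx | ⟨k, rfl⟩
    · rw [Set.mem_singleton_iff] at hx
      subst hx
      apply Submodule.mem_sup_right
      have := zpow_mem_Rsub (K := K) X0 (N : ℤ)
      rw [zpow_natCast] at this
      exact mul_mem_Rsub _ this
    · have e : u * ((MonoidAlgebra.of K F2 X1 - 1) * MonoidAlgebra.of K F2 (X0 ^ k)) =
        u * (MonoidAlgebra.of K F2 X1 - 1) + (u * (MonoidAlgebra.of K F2 X1 - 1)) *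
          (MonoidAlgebra.of K F2 (X0 ^ k) - 1) := by noncomm_ring
      change u * ((MonoidAlgebra.of K F2 X1 - 1) * MonoidAlgebra.of K F2 (X0 ^ k)) ∈ _
      rw [e]
      refine Submodule.add_mem_sup ⟨?_, ?_⟩ (mul_mem_Rsub _ (zpow_mem_Rsub _ _))
      · rw [Ipow_succ']
        exact Submodule.mul_mem_mul hu (X1_mem_Isub K N)
      · exact ⟨u, rfl⟩
  | zero => rw [mul_zero]; exact zero_mem _
  | add x y _ _ h1 h2 => rw [mul_add]; exact add_mem (h1 u hu) (h2 u hu)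
  | smul a x _ h =>
    rw [smul_eq_mul, ← mul_assoc]
    exact h _ (Ipow_mul_right a hu)

lemma part_zero (K : Type*) [CommRing K] (x : MonoidAlgebra K F2) :
    x ∈ Wsub K ⊔ Rsub K X0 := by
  induction x using MonoidAlgebra.induction_linear with
  | zero => exact zero_mem _
  | add a b ha hb => exact add_mem ha hb
  | single g r =>
    have h := Tgrp_top (K := K)
      (J := Ideal.span {MonoidAlgebra.of K F2 X1 - 1} ⊔ Ideal.span {MonoidAlgebra.of K F2 X0 - 1})
      (mem_Tgrp.2 (Submodule.mem_sup_right (Ideal.subset_span rfl)))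
      (mem_Tgrp.2 (Submodule.mem_sup_left (Ideal.subset_span rfl))) g
    rw [mem_Tgrp, Submodule.mem_sup] at h
    obtain ⟨y, hy, z, hz, e⟩ := h
    have e2 : MonoidAlgebra.single g r = r • ((1 + y) + z) := by
      rw [add_assoc, e]; simp
    rw [e2]
    refine Submodule.smul_mem _ _ (Submodule.add_mem_sup ?_ (mem_Rsub_iff.2 hz))
    exact Submodule.add_mem_sup (Submodule.mem_span_singleton_self _) (mem_Rsub_iff.2 hy)

/-- For every `m ≥ 1`, `I^m ⊆ (I^m ∩ K[F₂](X₁ − 1)) + K[F₂](X₀ − 1)`; consequently, for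
every `m ≥ 0` the images of `I^m` and of `(K·1 ⊕ K[F₂](X₁ − 1)) ∩ I^m` under the quotient
map `K[F₂] → K[F₂]/K[F₂](X₀ − 1)` coincide. -/
theorem statement5 (K : Type*) [CommRing K] [Algebra ℚ K] (N : ℕ) (hN : 0 < N) :
    (∀ m : ℕ, 1 ≤ m → Ipow K N m ≤ (Ipow K N m ⊓ Rsub K X1) ⊔ Rsub K X0) ∧
    ∀ m : ℕ,
      Submodule.map (Rsub K X0).mkQ (Ipow K N m) =
        Submodule.map (Rsub K X0).mkQ (Wsub K ⊓ Ipow K N m) := by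
  have aux : ∀ m : ℕ, Ipow K N m ≤ (Wsub K ⊓ Ipow K N m) ⊔ Rsub K X0 := by
    intro m
    cases m with
    | zero =>
      intro x _
      have : Wsub K ⊓ Ipow K N 0 = Wsub K := inf_top_eq _
      rw [this]
      exact part_zero K x
    | succ m =>
      refine (part_one K N hN m).trans (sup_le_sup_right ?_ _)
      rw [inf_comm]
      exact inf_le_inf_right _ le_sup_right
  refine ⟨?_, ?_⟩
  · intro m hm
    obtain ⟨n, rfl⟩ := Nat.exists_eq_add_of_le' hm
    exact part_one K N hN n
  · intro m
    apply le_antisymm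
    · refine (Submodule.map_mono (aux m)).trans ?_
      rw [Submodule.map_sup]
      refine sup_le le_rfl ?_
      rw [Submodule.mkQ_map_self]
      exact bot_le
    · exact Submodule.map_mono inf_le_right
end
end

section
/- The canonical projection K[F₂] → K[F₂]/K[F₂](X₀ − 1) restricts to a K-module isomorphism from the K-submodule W := K·1 ⊕ K[F₂](X₁ − 1) onto the quotient K[F₂]/K[F₂](X₀ − 1). -/
noncomputable section

open MonoidAlgebra in
def foxU (K : Type*) [CommRing K] (i : Fin 2) :
    (Matrix (Fin 2) (Fin 2) (MonoidAlgebra K F2))ˣ where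
  val := !![of K F2 (FreeGroup.of i), if i = 1 then 1 else 0; 0, 1]
  inv := !![of K F2 (FreeGroup.of i)⁻¹,
    - (of K F2 (FreeGroup.of i)⁻¹ * if i = 1 then 1 else 0); 0, 1]
  val_inv := by
    rw [Matrix.mul_fin_two, Matrix.one_fin_two, mul_neg, ← mul_assoc, ← map_mul, mul_inv_cancel, map_one]
    simp
  inv_val := by
    rw [Matrix.mul_fin_two, Matrix.one_fin_two, ← map_mul, inv_mul_cancel, map_one]
    simp

def foxG (K : Type*) [CommRing K] : F2 →* Matrix (Fin 2) (Fin 2) (MonoidAlgebra K F2) :=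
  (Units.coeHom _).comp (FreeGroup.lift (foxU K))

lemma foxG_col (K : Type*) [CommRing K] (g : F2) :
    foxG K g 0 0 = MonoidAlgebra.of K F2 g ∧ foxG K g 1 0 = 0 := by
  induction g using FreeGroup.induction_on with
  | C1 => rw [map_one, map_one]; simp
  | of i => simp [foxG, foxU]
  | inv_of i _ => simp [foxG, foxU, ← Units.inv_eq_val_inv]
  | mul a b ha hb =>
    rw [map_mul, map_mul, Matrix.mul_apply, Matrix.mul_apply, Fin.sum_univ_two, Fin.sum_univ_two,
      ha.1, ha.2, hb.1, hb.2]
    simp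

def foxA (K : Type*) [CommRing K] :
    MonoidAlgebra K F2 →ₐ[K] Matrix (Fin 2) (Fin 2) (MonoidAlgebra K F2) :=
  MonoidAlgebra.lift K _ F2 (foxG K)

lemma foxA_of (K : Type*) [CommRing K] (g : F2) :
    foxA K (MonoidAlgebra.of K F2 g) = foxG K g := by
  simp [foxA]

lemma foxA_col (K : Type*) [CommRing K] (v : MonoidAlgebra K F2) :
    foxA K v 0 0 = v ∧ foxA K v 1 0 = 0 := by
  induction v using MonoidAlgebra.induction_on with
  | of g => rw [foxA_of]; exact foxG_col K g
  | add a b ha hb => simp [map_add, ha, hb]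
  | smul r a ha => simp [map_smul, ha]

lemma foxA_X0 (K : Type*) [CommRing K] (v : MonoidAlgebra K F2) (j : Fin 2) :
    foxA K (v * (MonoidAlgebra.of K F2 X0 - 1)) j 1 = 0 := by
  rw [map_mul, map_sub, map_one, foxA_of, Matrix.mul_apply, Fin.sum_univ_two]
  simp [foxG, foxU, X0]

lemma foxA_X1 (K : Type*) [CommRing K] (v : MonoidAlgebra K F2) (j : Fin 2) :
    foxA K (v * (MonoidAlgebra.of K F2 X1 - 1)) j 1 = foxA K v j 0 := by
  rw [map_mul, map_sub, map_one, foxA_of, Matrix.mul_apply, Fin.sum_univ_two]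
  simp [foxG, foxU, X1]

lemma gen_mem (K : Type*) [CommRing K] (i : Fin 2) (v : MonoidAlgebra K F2) :
    v * (MonoidAlgebra.of K F2 (FreeGroup.of i) - 1) ∈ Rsub K X1 ⊔ Rsub K X0 := by
  fin_cases i
  · exact Submodule.mem_sup_right ⟨v, rfl⟩
  · exact Submodule.mem_sup_left ⟨v, rfl⟩

lemma aug_mem (K : Type*) [CommRing K] (g : F2) : ∀ v : MonoidAlgebra K F2,
    v * (MonoidAlgebra.of K F2 g - 1) ∈ Rsub K X1 ⊔ Rsub K X0 := by
  induction g using FreeGroup.induction_on with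
  | C1 => intro v; rw [map_one]; simp
  | of i => exact gen_mem K i
  | inv_of i _ =>
    intro v
    have h := Submodule.neg_mem _
      (gen_mem K i (v * MonoidAlgebra.of K F2 (FreeGroup.of i)⁻¹))
    convert h using 1
    rw [mul_sub, mul_sub, mul_assoc, ← map_mul, inv_mul_cancel, map_one]
    simp
  | mul a b ha hb =>
    intro v
    have h := Submodule.add_mem _ (hb (v * MonoidAlgebra.of K F2 a)) (ha v)
    convert h using 1
    rw [map_mul]
    noncomm_ring

lemma all_mem (K : Type*) [CommRing K] (v : MonoidAlgebra K F2) :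
    v ∈ Wsub K ⊔ Rsub K X0 := by
  induction v using MonoidAlgebra.induction_on with
  | of g =>
    rw [Wsub, sup_assoc]
    have h := Submodule.add_mem_sup (Submodule.mem_span_singleton_self (R := K) 1) (aug_mem K g 1)
    simpa using h
  | add a b ha hb => exact Submodule.add_mem _ ha hb
  | smul r a ha => exact Submodule.smul_mem _ r ha

/-- The canonical projection `K[F₂] → K[F₂]/K[F₂](X₀ − 1)` restricts to a `K`-module
isomorphism from `W = K·1 ⊕ K[F₂](X₁ − 1)` onto the quotient. -/
theorem statement6 (K : Type*) [CommRing K] [Algebra ℚ K] :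
    Function.Bijective ((Rsub K X0).mkQ ∘ₗ (Wsub K).subtype) := by
  constructor
  · rw [← LinearMap.ker_eq_bot, LinearMap.ker_eq_bot']
    rintro ⟨w, hw⟩ h
    have h0 : w ∈ Rsub K X0 := by simpa using h
    obtain ⟨a, ha, b, ⟨v, hv⟩, rfl⟩ := Submodule.mem_sup.1 hw
    obtain ⟨c, rfl⟩ := Submodule.mem_span_singleton.1 ha
    obtain ⟨u, hu⟩ := h0
    rw [LinearMap.mulRight_apply] at hu hv
    have e (j : Fin 2) := congrArg (fun m => foxA K m j 1) hu
    simp only [← hv, map_add, Matrix.add_apply, foxA_X0, foxA_X1] at e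
    have e0 := e 0
    have e1 := e 1
    rw [(foxA_col K v).1, map_smul, map_one] at e0
    rw [(foxA_col K v).2, map_smul, map_one] at e1
    have e0' : v = 0 := by simpa using e0.symm
    have e1' : c • (1 : MonoidAlgebra K F2) = 0 := by simpa using e1.symm
    ext1
    simp [← hv, e0', e1']
  · intro q
    obtain ⟨v, rfl⟩ := Submodule.mkQ_surjective _ q
    obtain ⟨w, hw, r, hr, rfl⟩ := Submodule.mem_sup.1 (all_mem K v)
    refine ⟨⟨w, hw⟩, ?_⟩
    have : (Rsub K X0).mkQ r = 0 := by simpa using hr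
    rw [map_add, this, add_zero]
    rfl
end
end

section
/- Let V be a K-module, u a K-linear endomorphism of V, and N ≥ 1 an integer. Let f : V^N → V^N be the K-linear endomorphism given by f(v₀, …, v_{N−1}) = (u(v_{N−1}) − v₀, v₀ − v₁, v₁ − v₂, …, v_{N−2} − v_{N−1}). Then the cokernel of f is isomorphic as a K-module to the cokernel of u − id; more precisely, the map V^N → V, (v₀, …, v_{N−1}) ↦ v₀ + ⋯ + v_{N−1}, sends the image of f into the image of u − id and induces a K-module isomorphism V^N/Im(f) → V/Im(u − id). -/
noncomputable section

/-- Let `u` be a `K`-linear endomorphism of `V`, `N ≥ 1`, and let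
`f(v₀, …, v_{N−1}) = (u(v_{N−1}) − v₀, v₀ − v₁, …, v_{N−2} − v_{N−1})`.
Then the summation map `(v₀, …, v_{N−1}) ↦ v₀ + ⋯ + v_{N−1}` sends `Im f` into
`Im(u − id)` and induces a `K`-module isomorphism `V^N/Im(f) ≃ V/Im(u − id)`. -/
theorem statement7 (K : Type*) [CommRing K] [Algebra ℚ K] (V : Type*) [AddCommGroup V]
    [Module K V] (N : ℕ) (hN : 1 ≤ N) (u : V →ₗ[K] V)
    (f : (Fin N → V) →ₗ[K] (Fin N → V))
    (hf0 : ∀ v : Fin N → V,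
      f v ⟨0, hN⟩ = u (v ⟨N - 1, by omega⟩) - v ⟨0, hN⟩)
    (hfi : ∀ (v : Fin N → V) (i : Fin N), 0 < (i : ℕ) →
      f v i = v ⟨(i : ℕ) - 1, lt_of_le_of_lt (Nat.sub_le _ _) i.isLt⟩ - v i) :
    (∀ v : Fin N → V, (∑ i, f v i) ∈ LinearMap.range (u - LinearMap.id)) ∧
    ∃ e : ((Fin N → V) ⧸ LinearMap.range f) ≃ₗ[K]
        (V ⧸ LinearMap.range (u - LinearMap.id)),
      ∀ v : Fin N → V,
        e (Submodule.Quotient.mk v) = Submodule.Quotient.mk (∑ i, v i) := by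
  obtain ⟨n, rfl⟩ : ∃ n, N = n + 1 := ⟨N - 1, by omega⟩
  have h0 : ∀ v : Fin (n + 1) → V, f v 0 = u (v (Fin.last n)) - v 0 := fun v => hf0 v
  have hs : ∀ (v : Fin (n + 1) → V) (i : Fin n), f v i.succ = v i.castSucc - v i.succ :=
    fun v i => hfi v i.succ (by simp)
  have hsum : ∀ v : Fin (n + 1) → V,
      ∑ i, f v i = (u - LinearMap.id : V →ₗ[K] V) (v (Fin.last n)) := by
    intro v
    have h1 := Fin.sum_univ_succ v
    rw [Fin.sum_univ_castSucc] at h1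
    rw [Fin.sum_univ_succ, h0]
    simp only [hs, Finset.sum_sub_distrib, LinearMap.sub_apply, LinearMap.id_apply]
    rw [eq_sub_of_add_eq h1]
    abel
  have hmem : ∀ v : Fin (n + 1) → V,
      (∑ i, f v i) ∈ LinearMap.range (u - LinearMap.id) := fun v => ⟨_, (hsum v).symm⟩
  refine ⟨hmem, ?_⟩
  let S : (Fin (n + 1) → V) →ₗ[K] V := ∑ i, LinearMap.proj i
  have hS : ∀ v, S v = ∑ i, v i := fun v => by simp [S]
  have hle : LinearMap.range f ≤ (LinearMap.range (u - LinearMap.id)).comap S := by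
    rintro _ ⟨v, rfl⟩
    rw [Submodule.mem_comap, hS]
    exact hmem v
  refine ⟨LinearEquiv.ofBijective (Submodule.mapQ _ _ S hle) ⟨?_, ?_⟩, ?_⟩
  · rw [injective_iff_map_eq_zero]
    intro a ha
    obtain ⟨w, rfl⟩ := Submodule.Quotient.mk_surjective _ a
    rw [Submodule.mapQ_apply, Submodule.Quotient.mk_eq_zero, hS] at ha
    obtain ⟨x, hx⟩ := ha
    rw [Submodule.Quotient.mk_eq_zero]
    refine ⟨fun i => x + ∑ j ∈ Finset.Ioi i, w j, ?_⟩
    funext i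
    refine Fin.cases ?_ (fun i => ?_) i
    · rw [h0]
      have e1 : Finset.Ioi (Fin.last n) = ∅ := by
        ext j; simp [Fin.le_last]
      have e2 : ∑ j, w j = w 0 + ∑ j ∈ Finset.Ioi 0, w j := by
        rw [← Finset.sum_insert (by simp)]
        congr 1
        ext j; simp [Fin.pos_iff_ne_zero, em]
      rw [e2, LinearMap.sub_apply, LinearMap.id_apply] at hx
      rw [e1, Finset.sum_empty, add_zero, ← sub_sub, hx]
      abel
    · rw [hs]
      have e2 : ∑ j ∈ Finset.Ioi i.castSucc, w j
          = w i.succ + ∑ j ∈ Finset.Ioi i.succ, w j := by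
        rw [← Finset.sum_insert (by simp)]
        congr 1
        ext j
        simp only [Finset.mem_Ioi, Finset.mem_insert, Fin.lt_def, Fin.ext_iff,
          Fin.val_castSucc, Fin.val_succ]
        omega
      rw [e2]
      abel
  · intro b
    obtain ⟨x, rfl⟩ := Submodule.Quotient.mk_surjective _ b
    refine ⟨Submodule.Quotient.mk (Pi.single 0 x), ?_⟩
    rw [Submodule.mapQ_apply, hS]
    simp
  · intro v
    exact congrArg _ (hS v)
end
end
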